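/- Let V be a subspace of ℝ^S for a finite set S, and let T ⊆ S. Then the orthogonal complement in ℝ^T of the restriction V∘T equals the contraction of the orthogonal complement: (V∘T)^⊥ = V^⊥ × T. -/

import Mathlib

/-- The orthogonal complement of a subspace `V` of `ℝ^S` with respect to the
dot product `⟨x,y⟩ = ∑ e, x e * y e`. -/
def perpSub {S : Type*} [Fintype S] (V : Submodule ℝ (S → ℝ)) : Submodule ℝ (S → ℝ) where
  carrier := {y | ∀ x ∈ V, ∑ e, x e * y e = 0}
  zero_mem' := by intro x _; simp
  add_mem' := by
    intro a b ha hb x hx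
    simp only [Set.mem_setOf_eq] at ha hb
    simp [Pi.add_apply, mul_add, Finset.sum_add_distrib, ha x hx, hb x hx]
  smul_mem' := by
    intro c a ha x hx
    simp only [Set.mem_setOf_eq] at ha
    simp [Pi.smul_apply, smul_eq_mul, mul_left_comm, ← Finset.mul_sum, ha x hx]

/-- The restriction `V∘T` of a subspace `V ⊆ ℝ^S` to `T ⊆ S`:
all vectors `x|_T` for `x ∈ V`. -/
def restrictTo {S : Type*} (V : Submodule ℝ (S → ℝ)) (T : Set S) : Submodule ℝ (T → ℝ) :=
  V.map (LinearMap.funLeft ℝ ℝ (Subtype.val : T → S))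

/-- The subspace of vectors on `S` vanishing outside `T`. -/
def zeroOutside {S : Type*} (T : Set S) : Submodule ℝ (S → ℝ) where
  carrier := {x | ∀ e ∉ T, x e = 0}
  zero_mem' := by intro e _; rfl
  add_mem' := by
    intro a b ha hb e he
    simp [ha e he, hb e he]
  smul_mem' := by
    intro c a ha e he
    simp [ha e he]

/-- The contraction `V×T` of a subspace `V ⊆ ℝ^S` to `T ⊆ S`:
all vectors `x|_T` for `x ∈ V` with `x e = 0` for every `e ∉ T`. -/
def contractTo {S : Type*} (V : Submodule ℝ (S → ℝ)) (T : Set S) : Submodule ℝ (T → ℝ) :=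
  (V ⊓ zeroOutside T).map (LinearMap.funLeft ℝ ℝ (Subtype.val : T → S))

/-!
Restriction of vectors along an injection `f : T → S` and extension by zero are adjoint for the dot
product, so the orthogonal complement of `V∘T` consists of the vectors on `T` whose extension by
zero lies in `V^⊥`. Extension by zero inverts restriction on the vectors vanishing outside `T`, so
the same vectors make up the contraction of `V^⊥`.
-/

section AdjointPair

variable {R M M₁ M₃ : Type*} [CommSemiring R] [AddCommMonoid M] [Module R M]
  [AddCommMonoid M₁] [Module R M₁] [AddCommMonoid M₃] [Module R M₃]
  {I : R →+* R} {B : M →ₗ[R] M →ₛₗ[I] M₃} {B' : M₁ →ₗ[R] M₁ →ₛₗ[I] M₃}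

theorem orthogonalBilin_map_eq_comap_of_isAdjointPair {f : M →ₗ[R] M₁} {g : M₁ →ₗ[R] M}
    (hfg : LinearMap.IsAdjointPair B B' f g) (V : Submodule R M) :
    (V.map f).orthogonalBilin B' = (V.orthogonalBilin B).comap g := by
  ext y
  simp only [Submodule.mem_comap, Submodule.mem_orthogonalBilin_iff, Submodule.mem_map,
    forall_exists_index, and_imp, forall_apply_eq_imp_iff₂, hfg _ y]

end AdjointPair

section ExtendByZero

open Function

variable {R S T : Type*} {f : T → S}

theorem comp_dotProduct_eq_dotProduct_extend [NonUnitalNonAssocSemiring R] [Fintype S] [Fintype T]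
    (hf : Injective f) (x : S → R) (y : T → R) :
    (x ∘ f) ⬝ᵥ y = x ⬝ᵥ extend f y 0 := by
  refine Fintype.sum_of_injective f hf _ _ (fun e he ↦ ?_) (fun e ↦ ?_)
  · rw [extend_apply' _ _ _ he, Pi.zero_apply, mul_zero]
  · rw [hf.extend_apply, comp_apply]

theorem extend_comp_eq_self_of_eqOn_compl_range {x x' : S → R}
    (hx : Set.EqOn x x' (Set.range f)ᶜ) : extend f (x ∘ f) x' = x := by
  have factorsThrough : (x ∘ f).FactorsThrough f := fun _ _ h ↦ congrArg x h
  funext e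
  by_cases he : e ∈ Set.range f
  · obtain ⟨t, rfl⟩ := he
    exact factorsThrough.extend_apply x' t
  · rw [extend_apply' _ _ _ he, hx he]

theorem isAdjointPair_dotProductBilin_funLeft_extendByZero [CommSemiring R] [Fintype S] [Fintype T]
    (hf : Injective f) :
    LinearMap.IsAdjointPair (dotProductBilin R R) (dotProductBilin R R)
      (LinearMap.funLeft R R f) (ExtendByZero.linearMap R f) :=
  comp_dotProduct_eq_dotProduct_extend hf

theorem map_funLeft_inf_pi_compl_range_eq_comap_extendByZero [Semiring R] (hf : Injective f)
    (W : Submodule R (S → R)) :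
    (W ⊓ Submodule.pi (Set.range f)ᶜ fun _ ↦ ⊥).map (LinearMap.funLeft R R f) =
      W.comap (ExtendByZero.linearMap R f) := by
  ext y
  constructor
  · rintro ⟨x, ⟨hxW, hx⟩, rfl⟩
    have extend_restrict : extend f (x ∘ f) 0 = x :=
      extend_comp_eq_self_of_eqOn_compl_range hx
    change extend f (x ∘ f) 0 ∈ W
    rwa [extend_restrict]
  · intro hy
    have extend_vanishes : ∀ e ∉ Set.range f, extend f y 0 e = 0 :=
      fun e he ↦ extend_apply' _ _ e he
    exact ⟨extend f y 0, ⟨hy, extend_vanishes⟩, extend_comp hf y 0⟩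

theorem perp_restrict_eq_contract_perp_general [CommSemiring R] [Fintype S] [Fintype T]
    (hf : Injective f) (V : Submodule R (S → R)) :
    (V.map (LinearMap.funLeft R R f)).orthogonalBilin (dotProductBilin R R) =
      (V.orthogonalBilin (dotProductBilin R R) ⊓ Submodule.pi (Set.range f)ᶜ fun _ ↦ ⊥).map
        (LinearMap.funLeft R R f) := by
  rw [map_funLeft_inf_pi_compl_range_eq_comap_extendByZero hf,
    orthogonalBilin_map_eq_comap_of_isAdjointPair
      (isAdjointPair_dotProductBilin_funLeft_extendByZero hf)]

end ExtendByZero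

theorem perpSub_eq_orthogonalBilin {S : Type*} [Fintype S] (V : Submodule ℝ (S → ℝ)) :
    perpSub V = V.orthogonalBilin (dotProductBilin ℝ ℝ) :=
  rfl

theorem zeroOutside_eq_pi_compl_bot {S : Type*} (T : Set S) :
    zeroOutside T = Submodule.pi Tᶜ fun _ ↦ ⊥ :=
  rfl

/-- `(V∘T)^⊥ = V^⊥ × T`: the orthogonal complement of the restriction equals
the contraction of the orthogonal complement. -/
theorem perp_restrict_eq_contract_perp
    {S : Type*} [Fintype S] (V : Submodule ℝ (S → ℝ)) (T : Set S)
    [DecidablePred (· ∈ T)] :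
    perpSub (restrictTo V T) = contractTo (perpSub V) T := by
  simpa only [perpSub_eq_orthogonalBilin, restrictTo, contractTo, zeroOutside_eq_pi_compl_bot,
    Subtype.range_val] using
    perp_restrict_eq_contract_perp_general (Subtype.val_injective (p := (· ∈ T))) V
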